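/- There exists a constant C > 1 such that for every integer x ≥ 2 and every element W of N(∞) with |W| ≤ x, there is an expression W = ∏_{j=1}^{L} X_j R_j^{ε_j} X_j^{-1} in F with X_j ∈ F, R_j ∈ R(∞), ε_j = ±1, such that: the number of indices j with h(R_j) = 0 is at most 4·C·x²·log₂(x); for every i with 1 ≤ i ≤ log₂(x), the number of indices j with h(R_j) = i is at most C·x²/2^{i−1}; and there is no index j with h(R_j) > log₂(x). -/

import Mathlib

/-- The four-letter alphabet `{a, b, c, d}`. -/
inductive L4 : Type
  | a | b | c | d
  deriving DecidableEq

/-- The free group `F = F(a, b, c, d)`. -/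
abbrev F4 : Type := FreeGroup L4

def ga : F4 := FreeGroup.of L4.a
def gb : F4 := FreeGroup.of L4.b
def gc : F4 := FreeGroup.of L4.c
def gd : F4 := FreeGroup.of L4.d

/-- The endomorphism `σ` of `F(a,b,c,d)`:
`σ(a) = aca`, `σ(b) = d`, `σ(c) = b`, `σ(d) = c`. -/
def sigma : F4 →* F4 :=
  FreeGroup.lift fun x => match x with
    | L4.a => ga * gc * ga
    | L4.b => gd
    | L4.c => gb
    | L4.d => gc

/-- The Lysenok relator set
`R(∞) = {a², b², c², d², bcd} ∪ {σⁱ((ad)⁴) : i ≥ 0} ∪ {σⁱ((adacac)⁴) : i ≥ 0}`. -/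
def Rinf : Set F4 :=
  {ga ^ 2, gb ^ 2, gc ^ 2, gd ^ 2, gb * gc * gd}
    ∪ {w | ∃ i : ℕ, w = (⇑sigma)^[i] ((ga * gd) ^ 4)}
    ∪ {w | ∃ i : ℕ, w = (⇑sigma)^[i] ((ga * gd * ga * gc * ga * gc) ^ 4)}

/-- `W` is a product of `L` conjugates of elements of `R ∪ R⁻¹`. -/
def IsProdConjPM {G : Type*} [Group G] (R : Set G) (L : ℕ) (W : G) : Prop :=
  ∃ f : Fin L → G,
    (∀ j, ∃ x r, r ∈ R ∧ (f j = x * r * x⁻¹ ∨ f j = x * r⁻¹ * x⁻¹)) ∧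
    W = (List.ofFn f).prod

/-- The partition `R(∞) = ⋃ᵢ S(i)` by height: `S(0)` consists of the seven
relators `a², b², c², d², bcd, (ad)⁴, (adacac)⁴`, and for `i ≥ 1`,
`S(i) = {σⁱ((ad)⁴), σⁱ((adacac)⁴)}`. -/
def Sh : ℕ → Set F4
  | 0 => {ga ^ 2, gb ^ 2, gc ^ 2, gd ^ 2, gb * gc * gd,
          (ga * gd) ^ 4, (ga * gd * ga * gc * ga * gc) ^ 4}
  | (i + 1) => {(⇑sigma)^[i + 1] ((ga * gd) ^ 4),
                (⇑sigma)^[i + 1] ((ga * gd * ga * gc * ga * gc) ^ 4)}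

/-!
A word in `N(∞)` fixes the first level of the binary tree. Hence, modulo the relators of length at
most `3`, it is a product of about half as many letters `v` or `ava` with `v ∈ {b, c, d}`, and its
actions on the two subtrees, its sections, are words in `N(∞)` of about half the length.

Each letter is the image under `σ` of its right section times a residue `1` or `ada`. The residues
are moved to the right past the images under `σ`: modulo `(ad)⁴`, `(adacac)⁴` and `σ((ad)⁴)`, only
the action of the dihedral group `⟨aca, c⟩` of order `8` on their conjugates matters, so an exchange
has bounded cost. Thus a word of length `l` in `N(∞)` equals `σ(g₁) · a σ(g₀) a⁻¹`, where `g₁` and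
`g₀` are its sections, up to `O(l²)` relators of height at most `1`.

This is iterated. The map `σ` raises the height of the fourth powers by one. Each level doubles the
number of pieces and halves their length, which halves the total quadratic cost, so height `i` costs
`O(x² / 2 ^ i)`. At height `0` the growth comes from `a²` alone: its image under `σ` needs two
relators `a²`, which cancels the gain of one half per level and leaves `x²` for each of the `log₂ x`
levels.
-/

namespace Grigorchuk

/-! ### Areas with respect to a family of relator sets -/

section Area

variable {ι G : Type*} [Group G]

/-- `AreaLE T v g` says that `g` is a product of conjugates of elements `r ^ (±1)` with `r` in one
of the relator sets `T i`, at most `v i` of the factors being attributed to the class `i`. It is a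
refinement of the area of a van Kampen diagram for `g` by classes of relators. -/
inductive AreaLE (T : ι → Set G) : (ι → ℕ) → G → Prop
  | one (v : ι → ℕ) : AreaLE T v 1
  | mul {u v w : ι → ℕ} {g h : G} :
      AreaLE T u g → AreaLE T v h → u + v ≤ w → AreaLE T w (g * h)
  | conj_zpow {v : ι → ℕ} {i : ι} {r : G} (x : G) (ε : ℤˣ) :
      r ∈ T i → 1 ≤ v i → AreaLE T v (x * r ^ (ε : ℤ) * x⁻¹)

namespace AreaLE

variable {T : ι → Set G} {u v : ι → ℕ} {g : G}

lemma of_mem {i : ι} {r : G} (hr : r ∈ T i) (hi : 1 ≤ v i) : AreaLE T v r := by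
  simpa using conj_zpow 1 1 hr hi

lemma mono (h : AreaLE T u g) (huv : u ≤ v) : AreaLE T v g := by
  cases h with
  | one => exact one v
  | mul hg hh hle => exact mul hg hh (hle.trans huv)
  | conj_zpow x ε hr hi => exact conj_zpow x ε hr (hi.trans (huv _))

lemma conj (h : AreaLE T v g) (y : G) : AreaLE T v (y * g * y⁻¹) := by
  induction h with
  | one v => simpa using one v
  | mul _ _ hle ihg ihh =>
    rw [← conj_mul]
    exact mul ihg ihh hle
  | conj_zpow x ε hr hi => simpa [mul_assoc] using conj_zpow (y * x) ε hr hi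

lemma inv (h : AreaLE T v g) : AreaLE T v g⁻¹ := by
  induction h with
  | one v => simpa using one v
  | mul _ _ hle ihg ihh =>
    rw [mul_inv_rev]
    exact mul ihh ihg (by rwa [add_comm])
  | conj_zpow x ε hr hi => simpa [mul_assoc] using conj_zpow x (-ε) hr hi

lemma map {κ H : Type*} [DecidableEq ι] [Group H] {T' : κ → Set H} (φ : G →* H)
    (s : (ι → ℕ) →+ (κ → ℕ)) (hT : ∀ i, ∀ r ∈ T i, AreaLE T' (s (Pi.single i 1)) (φ r))
    (h : AreaLE T v g) : AreaLE T' (s v) (φ g) := by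
  have s_mono {u v : ι → ℕ} (huv : u ≤ v) : s u ≤ s v := by
    obtain ⟨w, rfl⟩ := le_iff_exists_add.1 huv
    simp
  induction h with
  | one v => simpa using one _
  | mul _ _ hle ihg ihh =>
    rw [map_mul]
    exact mul ihg ihh (by rw [← map_add]; exact s_mono hle)
  | @conj_zpow v i r x ε hr hi =>
    have hφr : AreaLE T' (s v) (φ r) := (hT i r hr).mono (s_mono fun j ↦ by
      obtain rfl | hj := eq_or_ne j i <;> simp [*])
    rw [map_mul, map_mul, map_inv, map_zpow]
    obtain rfl | rfl := Int.units_eq_one_or ε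
    · simpa using hφr.conj (φ x)
    · simpa using hφr.inv.conj (φ x)

lemma mem_normalClosure (h : AreaLE T v g) : g ∈ Subgroup.normalClosure (⋃ i, T i) := by
  induction h with
  | one => exact one_mem _
  | mul _ _ _ ihg ihh => exact mul_mem ihg ihh
  | @conj_zpow _ i _ x ε hr _ =>
    have hr' := Subgroup.subset_normalClosure (Set.mem_iUnion_of_mem i hr)
    exact Subgroup.normalClosure_normal.conj_mem _ (zpow_mem hr' _) x

lemma exists_of_mem_normalClosure (u : ι → ℕ)
    (hg : g ∈ Subgroup.normalClosure {r | ∃ i, 1 ≤ u i ∧ r ∈ T i}) :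
    ∃ k : ℕ, AreaLE T (k • u) g := by
  let S : Subgroup G :=
    { carrier := {g | ∃ k : ℕ, AreaLE T (k • u) g}
      mul_mem' := fun ⟨k, hk⟩ ⟨l, hl⟩ ↦ ⟨k + l, hk.mul hl (add_nsmul u k l).ge⟩
      one_mem' := ⟨0, one _⟩
      inv_mem' := fun ⟨k, hk⟩ ↦ ⟨k, hk.inv⟩ }
  have : S.Normal := ⟨fun g ⟨k, hk⟩ x ↦ ⟨k, hk.conj x⟩⟩
  suffices h : Subgroup.normalClosure {r | ∃ i, 1 ≤ u i ∧ r ∈ T i} ≤ S from h hg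
  rintro r hr
  refine Subgroup.normalClosure_le_normal ?_ hr
  rintro r ⟨i, hi, hr⟩
  exact ⟨1, of_mem hr (by simpa using hi)⟩

lemma exists_factorization (h : AreaLE T v g) :
    ∃ (L : ℕ) (X R : Fin L → G) (ε : Fin L → ℤˣ) (cls : Fin L → ι),
      (∀ j, R j ∈ T (cls j)) ∧
      g = (List.ofFn fun j ↦ X j * R j ^ (ε j : ℤ) * (X j)⁻¹).prod ∧
      ∀ i, Nat.card {j // cls j = i} ≤ v i := by
  classical
  simp only [Nat.card_eq_fintype_card, Fintype.card_subtype, Finset.card_filter]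
  induction h with
  | one v => exact ⟨0, Fin.elim0, Fin.elim0, Fin.elim0, Fin.elim0, by simp, by simp, by simp⟩
  | mul _ _ hle ihg ihh =>
    obtain ⟨L₁, X₁, R₁, ε₁, cls₁, hR₁, rfl, hcard₁⟩ := ihg
    obtain ⟨L₂, X₂, R₂, ε₂, cls₂, hR₂, rfl, hcard₂⟩ := ihh
    refine ⟨L₁ + L₂, Fin.append X₁ X₂, Fin.append R₁ R₂, Fin.append ε₁ ε₂,
      Fin.append cls₁ cls₂, ?_, ?_, fun i ↦ ?_⟩
    · exact Fin.addCases (by simpa using hR₁) (by simpa using hR₂)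
    · simp [List.ofFn_add, -List.ofFn_fin_append]
    · simp only [Fin.sum_univ_add, Fin.append_left, Fin.append_right]
      exact (add_le_add (hcard₁ i) (hcard₂ i)).trans (hle i)
  | @conj_zpow v i r x ε hr hi =>
    refine ⟨1, fun _ ↦ x, fun _ ↦ r, fun _ ↦ ε, fun _ ↦ i, fun _ ↦ hr, by simp, fun j ↦ ?_⟩
    rcases eq_or_ne i j with rfl | hij
    · simpa using hi
    · simp [hij]

end AreaLE

/-- `AreaDistLE T u k x y` says that `x` and `y` differ by a factor of area at most `k • u`. The
weight `u` records which classes of relators may be used, and `k` is the quantity to estimate. -/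
def AreaDistLE (T : ι → Set G) (u : ι → ℕ) (k : ℕ) (x y : G) : Prop :=
  AreaLE T (k • u) (x * y⁻¹)

namespace AreaDistLE

variable {T : ι → Set G} {u : ι → ℕ} {k l : ℕ} {x y z : G}

lemma refl (k : ℕ) (x : G) : AreaDistLE T u k x x := by
  simpa [AreaDistLE] using AreaLE.one _

lemma mono (h : AreaDistLE T u k x y) (hkl : k ≤ l) : AreaDistLE T u l x y :=
  AreaLE.mono h (nsmul_le_nsmul_left (fun _ ↦ Nat.zero_le _) hkl)

lemma mono_weight {u' : ι → ℕ} (h : AreaDistLE T u k x y) (hu : u ≤ u') :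
    AreaDistLE T u' k x y :=
  AreaLE.mono h (nsmul_le_nsmul_right hu k)

lemma symm (h : AreaDistLE T u k x y) : AreaDistLE T u k y x := by
  simpa [AreaDistLE] using AreaLE.inv h

lemma trans (hxy : AreaDistLE T u k x y) (hyz : AreaDistLE T u l y z) :
    AreaDistLE T u (k + l) x z := by
  simpa [AreaDistLE, mul_assoc] using AreaLE.mul hxy hyz (add_nsmul u k l).ge

instance : Trans (AreaDistLE T u k) (AreaDistLE T u l) (AreaDistLE T u (k + l)) :=
  ⟨trans⟩

lemma mul_left (z : G) (h : AreaDistLE T u k x y) : AreaDistLE T u k (z * x) (z * y) := by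
  simpa [AreaDistLE, mul_assoc] using AreaLE.conj h z

lemma mul_right (z : G) (h : AreaDistLE T u k x y) : AreaDistLE T u k (x * z) (y * z) := by
  simpa [AreaDistLE, mul_assoc] using h

lemma interleave {k₁ k₂ k₃ k₄ : ℕ} {p q r s e e' t t' m n : G}
    (hp : AreaDistLE T u k₁ p (r * e)) (hq : AreaDistLE T u k₂ q (s * t * n))
    (hswap : AreaDistLE T u k₃ (e * s) (s * e')) (hmerge : AreaDistLE T u k₄ (e' * t) (t' * m)) :
    AreaDistLE T u (k₁ + k₂ + k₃ + k₄) (p * q) (r * s * t' * (m * n)) :=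
  calc
    AreaDistLE T u k₁ (p * q) (r * e * q) := hp.mul_right _
    AreaDistLE T u k₂ _ (r * e * (s * t * n)) := hq.mul_left _
    _ = r * (e * s * (t * n)) := by simp only [mul_assoc]
    AreaDistLE T u k₃ _ (r * (s * e' * (t * n))) := (hswap.mul_right _).mul_left _
    _ = r * s * (e' * t * n) := by simp only [mul_assoc]
    AreaDistLE T u k₄ _ (r * s * (t' * m * n)) := (hmerge.mul_right _).mul_left _
    _ = r * s * t' * (m * n) := by simp only [mul_assoc]

lemma areaLE_add {v : ι → ℕ} (hxy : AreaDistLE T u k x y) (hy : AreaLE T v y) :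
    AreaLE T (k • u + v) x := by
  simpa using AreaLE.mul hxy hy le_rfl

lemma mem_normalClosure (h : AreaDistLE T u k x y)
    (hx : x ∈ Subgroup.normalClosure (⋃ i, T i)) : y ∈ Subgroup.normalClosure (⋃ i, T i) := by
  simpa using mul_mem (inv_mem (AreaLE.mem_normalClosure h)) hx

lemma exists_uniform {κ : Type*} [Finite κ] (T : ι → Set G) (u : ι → ℕ) (x y : κ → G)
    (h : ∀ j, (x j : G ⧸ Subgroup.normalClosure {r | ∃ i, 1 ≤ u i ∧ r ∈ T i}) = y j) :
    ∃ K : ℕ, ∀ j, AreaDistLE T u K (x j) (y j) := by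
  have hk (j : κ) : ∃ k : ℕ, AreaDistLE T u k (x j) (y j) :=
    AreaLE.exists_of_mem_normalClosure u
      ((QuotientGroup.eq_one_iff _).1 (by simp [h j]))
  choose k hk using hk
  obtain ⟨K, hK⟩ := Finite.bddAbove_range k
  exact ⟨K, fun j ↦ (hk j).mono (hK ⟨j, rfl⟩)⟩

end AreaDistLE

end Area

/-! ### Groups generated by two involutions -/

section Dihedral

variable {G : Type*} [Group G] {s t : G}

lemma mul_self_cancel_left (hs : s * s = 1) (x : G) : s * (s * x) = x := by
  rw [← mul_assoc, hs, one_mul]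

lemma commute_of_mul_mul_mul_eq_one (hs : s * s = 1) (ht : t * t = 1) (hst : s * t * (s * t) = 1) :
    Commute s t := by
  have h := inv_eq_of_mul_eq_one_right hst
  rwa [mul_inv_rev, inv_eq_of_mul_eq_one_right hs, inv_eq_of_mul_eq_one_right ht, eq_comm] at h

lemma involution_mul_zpow (hs : s * s = 1) (ht : t * t = 1) (m : ℤ) :
    s * (s * t) ^ m = (s * t) ^ (-m) * s := by
  have hconj : SemiconjBy s (s * t) (s * t)⁻¹ := by
    rw [SemiconjBy, mul_inv_rev, inv_eq_of_mul_eq_one_right hs, inv_eq_of_mul_eq_one_right ht,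
      mul_self_cancel_left hs, mul_assoc, hs, mul_one]
  rw [zpow_neg, ← inv_zpow]
  exact hconj.zpow_right m

/-- The homomorphism from the dihedral group of order `2 * n` with `sr 0 ↦ s` and `sr 1 ↦ t`,
for involutions `s` and `t` with `(s * t) ^ n = 1`. -/
def dihedralLift (n : ℕ) (hs : s * s = 1) (ht : t * t = 1) (hst : (s * t) ^ n = 1) :
    DihedralGroup n →* G :=
  let rot : ZMod n →+ Additive G := ZMod.lift n ⟨zmultiplesHom _ (Additive.ofMul (s * t)), by
    rw [zmultiplesHom_apply, natCast_zsmul, ← ofMul_pow, hst, ofMul_one]⟩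
  have rot_neg (i : ZMod n) : s * (rot i).toMul = (rot (-i)).toMul * s := by
    obtain ⟨m, rfl⟩ := ZMod.intCast_surjective i
    rw [← Int.cast_neg, ZMod.lift_coe, ZMod.lift_coe]
    exact involution_mul_zpow hs ht m
  MonoidHom.mk' (fun g ↦ match g with
    | .r i => (rot i).toMul
    | .sr i => s * (rot i).toMul) <| by
    rintro (i | i) (j | j)
    · simp
    · have hi := rot_neg (-i)
      rw [neg_neg] at hi
      simp only [DihedralGroup.r_mul_sr]
      rw [← mul_assoc, ← hi, mul_assoc, ← toMul_add, ← map_add, sub_eq_neg_add]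
    · simp [mul_assoc]
    · simp only [DihedralGroup.sr_mul_sr]
      rw [rot_neg, mul_assoc, mul_self_cancel_left hs, ← toMul_add, ← map_add, sub_eq_neg_add]

variable {n : ℕ} [NeZero n] (hs : s * s = 1) (ht : t * t = 1) (hst : (s * t) ^ n = 1)

lemma dihedralLift_r (i : ZMod n) : dihedralLift n hs ht hst (.r i) = (s * t) ^ i.val := by
  conv_lhs => rw [← ZMod.natCast_zmod_val i, ← Int.cast_natCast]
  exact (congrArg Additive.toMul (ZMod.lift_coe n _ _)).trans (zpow_natCast _ _)

lemma dihedralLift_sr (i : ZMod n) :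
    dihedralLift n hs ht hst (.sr i) = s * (s * t) ^ i.val :=
  congrArg (s * ·) (dihedralLift_r hs ht hst i)

end Dihedral

/-! ### The free group on four letters -/

section Generators

variable {G : Type*} [Group G]

/-- The homomorphism with prescribed values on the generators `a`, `b`, `c`, `d`. -/
def genLift (a b c d : G) : F4 →* G :=
  FreeGroup.lift fun x ↦ match x with
    | .a => a
    | .b => b
    | .c => c
    | .d => d

variable (a b c d : G)

@[simp] lemma genLift_ga : genLift a b c d ga = a := by simp [genLift, ga]

@[simp] lemma genLift_gb : genLift a b c d gb = b := by simp [genLift, gb]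

@[simp] lemma genLift_gc : genLift a b c d gc = c := by simp [genLift, gc]

@[simp] lemma genLift_gd : genLift a b c d gd = d := by simp [genLift, gd]

lemma hom_ext_generators {f g : F4 →* G} (ha : f ga = g ga) (hb : f gb = g gb) (hc : f gc = g gc)
    (hd : f gd = g gd) : f = g := by
  ext x
  cases x <;> assumption

end Generators

@[simp] lemma sigma_ga : sigma ga = ga * gc * ga := by simp [sigma, ga]

@[simp] lemma sigma_gb : sigma gb = gd := by simp [sigma, gb]

@[simp] lemma sigma_gc : sigma gc = gb := by simp [sigma, gc]

@[simp] lemma sigma_gd : sigma gd = gc := by simp [sigma, gd]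

/-! ### Classes of Lysenok relators -/

/-- The classes of relators counted separately. The relator `a²` has a class of its own because
`σ` sends it to a product of three conjugates of relators, and every other relator to a conjugate
of a single one. -/
inductive RelClass : Type
  | aSq
  | klein
  | fourth (i : ℕ)
  deriving DecidableEq

/-- The relators of each class. -/
def relators : RelClass → Set F4
  | .aSq => {ga ^ 2}
  | .klein => {gb ^ 2, gc ^ 2, gd ^ 2, gb * gc * gd}
  | .fourth i => {(⇑sigma)^[i] ((ga * gd) ^ 4), (⇑sigma)^[i] ((ga * gd * ga * gc * ga * gc) ^ 4)}

lemma iUnion_relators : ⋃ c, relators c = Rinf := by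
  ext r
  simp only [Set.mem_iUnion, Rinf]
  constructor
  · rintro ⟨_ | _ | i, hr⟩
    · exact .inl (.inl (.inl hr))
    · exact .inl (.inl (.inr hr))
    · exact hr.elim (fun h ↦ .inl (.inr ⟨i, h⟩)) fun h ↦ .inr ⟨i, h⟩
  · rintro (((hr | hr) | ⟨i, hr⟩) | ⟨i, hr⟩)
    · exact ⟨.aSq, hr⟩
    · exact ⟨.klein, hr⟩
    · exact ⟨.fourth i, .inl hr⟩
    · exact ⟨.fourth i, .inr hr⟩

/-- The height of the relators of a class. -/
def RelClass.height : RelClass → ℕ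
  | .aSq => 0
  | .klein => 0
  | .fourth i => i

lemma exists_mem_relators_of_mem_Sh {i : ℕ} {r : F4} (hr : r ∈ Sh i) :
    ∃ c : RelClass, c.height = i ∧ r ∈ relators c := by
  cases i with
  | zero =>
    rcases hr with hr | hr | hr | hr | hr | hr
    · exact ⟨.aSq, rfl, hr⟩
    · exact ⟨.klein, rfl, .inl hr⟩
    · exact ⟨.klein, rfl, .inr (.inl hr)⟩
    · exact ⟨.klein, rfl, .inr (.inr (.inl hr))⟩
    · exact ⟨.klein, rfl, .inr (.inr (.inr hr))⟩
    · exact ⟨.fourth 0, rfl, hr⟩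
  | succ i => exact ⟨.fourth (i + 1), rfl, hr⟩

/-- The exponent sum of the letter `a`. -/
def aExp : F4 →* Multiplicative ℤ := genLift (Multiplicative.ofAdd 1) 1 1 1

lemma aExp_sigma (g : F4) : (aExp (sigma g)).toAdd = 2 * (aExp g).toAdd := by
  have h : aExp.comp sigma = (powMonoidHom 2).comp aExp := by
    apply hom_ext_generators <;> simp [aExp, pow_two]
  simpa using congrArg Multiplicative.toAdd (DFunLike.congr_fun h g)

lemma aExp_iterate_sigma (i : ℕ) (g : F4) :
    (aExp ((⇑sigma)^[i] g)).toAdd = 2 ^ i * (aExp g).toAdd := by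
  induction i with
  | zero => simp
  | succ i ih => rw [Function.iterate_succ_apply', aExp_sigma, ih, pow_succ', mul_assoc]

lemma padicValInt_two_pow_mul {z : ℤ} (hz : Odd z) (n : ℕ) : padicValInt 2 (2 ^ n * z) = n := by
  have hz_val : padicValInt 2 z = 0 :=
    padicValInt.eq_zero_of_not_dvd (Int.not_even_iff_odd.2 hz ∘ even_iff_two_dvd.2)
  induction n with
  | zero => simpa using hz_val
  | succ n ih =>
    have hne : 2 ^ n * z ≠ 0 :=
      mul_ne_zero (by positivity) (by rintro rfl; exact absurd hz (by decide))
    rw [pow_succ, mul_right_comm]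
    exact (padicValInt_mul_eq_succ _ hne).trans (by rw [ih])

-- The exponent sum of `a` is `0` or `2` on the relators of length at most `3`, hence the truncated
-- subtraction; it is `4 * 2 ^ i` or `12 * 2 ^ i` on the fourth powers.
lemma padicValInt_aExp_sub_two {c : RelClass} {r : F4} (hr : r ∈ relators c) :
    padicValInt 2 (aExp r).toAdd - 2 = c.height := by
  rcases c with _ | _ | i
  · obtain rfl := hr
    have hval : padicValInt 2 2 = 1 := padicValInt_self
    simp [aExp, RelClass.height, hval]
  · rcases hr with rfl | rfl | rfl | rfl <;> simp [aExp, RelClass.height]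
  · have hval {z : ℤ} (hz : Odd z) : padicValInt 2 (2 ^ i * (2 ^ 2 * z)) - 2 = i := by
      rw [← mul_assoc, ← pow_add, padicValInt_two_pow_mul hz, Nat.add_sub_cancel]
    rcases hr with rfl | rfl <;> rw [aExp_iterate_sigma]
    · simpa [aExp, RelClass.height] using hval (z := 1) (by decide)
    · simpa [aExp, RelClass.height] using hval (z := 3) (by decide)

lemma height_eq_of_mem_Sh {c : RelClass} {i : ℕ} {r : F4} (hc : r ∈ relators c) (hi : r ∈ Sh i) :
    c.height = i := by
  obtain ⟨c', rfl, hc'⟩ := exists_mem_relators_of_mem_Sh hi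
  rw [← padicValInt_aExp_sub_two hc, padicValInt_aExp_sub_two hc']

/-- The bookkeeping of `σ`: an element with relator counts `v` has image under `σ` with relator
counts `shiftCost v`, since `σ(a²)` costs two relators `a²` and one relator `c²`. -/
def shiftCost : (RelClass → ℕ) →+ (RelClass → ℕ) where
  toFun v
    | .aSq => 2 * v .aSq
    | .klein => v .aSq + v .klein
    | .fourth 0 => 0
    | .fourth (i + 1) => v (.fourth i)
  map_zero' := by
    funext c
    rcases c with _ | _ | _ | _ <;> rfl
  map_add' u v := by
    funext c
    rcases c with _ | _ | _ | _ <;> simp only [Pi.add_apply] <;> ring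

lemma AreaLE.sigma_ga_sq :
    AreaLE relators (shiftCost (Pi.single .aSq 1)) (sigma (ga ^ 2)) := by
  have hfactor : sigma (ga ^ 2) =
      (ga * gc * ga ^ 2 * (ga * gc)⁻¹) * ((ga * gc ^ 2 * ga⁻¹) * ga ^ 2) := by
    simp [pow_two, mul_assoc]
  have ha : AreaLE relators (Pi.single .aSq 1) (ga ^ 2) :=
    .of_mem (show _ ∈ relators .aSq from rfl) (by simp)
  have hc : AreaLE relators (Pi.single .klein 1) (gc ^ 2) :=
    .of_mem (show _ ∈ relators .klein from .inr (.inl rfl)) (by simp)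
  rw [hfactor]
  refine (ha.conj _).mul ((hc.conj _).mul ha le_rfl) fun c ↦ ?_
  rcases c with _ | _ | _ | _ <;> simp [shiftCost]

lemma AreaLE.sigma_mem_klein {r : F4} (hr : r ∈ relators .klein) :
    AreaLE relators (shiftCost (Pi.single .klein 1)) (sigma r) := by
  have hbcd : sigma (gb * gc * gd) = gd * (gb * gc * gd) * gd⁻¹ := by simp [mul_assoc]
  have of_klein {r : F4} (hr : r ∈ relators .klein) :
      AreaLE relators (shiftCost (Pi.single .klein 1)) r := .of_mem hr (by simp [shiftCost])
  rcases hr with rfl | rfl | rfl | rfl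
  · simpa using of_klein (.inr (.inr (.inl rfl)))
  · simpa using of_klein (.inl rfl)
  · simpa using of_klein (.inr (.inl rfl))
  · rw [hbcd]
    exact (of_klein (.inr (.inr (.inr rfl)))).conj gd

lemma AreaLE.sigma_mem_relators {c : RelClass} {r : F4} (hr : r ∈ relators c) :
    AreaLE relators (shiftCost (Pi.single c 1)) (sigma r) := by
  rcases c with _ | _ | i
  · obtain rfl := hr
    exact sigma_ga_sq
  · exact sigma_mem_klein hr
  · refine .of_mem (i := .fourth (i + 1)) ?_ (by simp [shiftCost])
    simp only [relators, Function.iterate_succ_apply']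
    exact hr.imp (congrArg _) (congrArg _)

lemma AreaLE.sigma {v : RelClass → ℕ} {g : F4} (h : AreaLE relators v g) :
    AreaLE relators (shiftCost v) (sigma g) :=
  h.map _ shiftCost fun _ _ ↦ sigma_mem_relators

/-! ### Identities modulo the shallow relators -/

local notation:50 x:51 "≈[" u "," k "]" y:51 => AreaDistLE relators u k x y

/-- The weight allowing the relators `a²`, `b²`, `c²`, `d²` and `bcd`. -/
def basic : RelClass → ℕ
  | .fourth _ => 0
  | _ => 1

/-- The weight allowing the relators of height at most `1`. -/
def shallow : RelClass → ℕ
  | .fourth (_ + 2) => 0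
  | _ => 1

lemma basic_le_shallow : basic ≤ shallow := by
  rintro (_ | _ | _ | _ | _) <;> simp [basic, shallow]

/-- The homomorphisms trivial on the relators of weight `basic`, in a form suited to rewriting. -/
structure KillsBasic {G : Type*} [Group G] (f : F4 →* G) : Prop where
  a_mul_a : f ga * f ga = 1
  c_mul_c : f gc * f gc = 1
  d_mul_d : f gd * f gd = 1
  b_eq : f gb = f gc * f gd
  d_mul_c : f gd * f gc = f gc * f gd

/-- The homomorphisms trivial on the relators of weight `shallow`. The last field comes from
`σ((ad)⁴)`. -/
structure KillsShallow {G : Type*} [Group G] (f : F4 →* G) : Prop extends KillsBasic f where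
  ad_pow : (f ga * f gd) ^ 4 = 1
  adacac_pow : (f ga * f gd * f ga * f gc * f ga * f gc) ^ 4 = 1
  acac_pow : (f ga * f gc * f ga * f gc) ^ 4 = 1

section Kills

variable {G : Type*} [Group G] {f : F4 →* G}

lemma KillsBasic.of_relators (h : ∀ c, 1 ≤ basic c → ∀ r ∈ relators c, f r = 1) :
    KillsBasic f := by
  have hb := h .klein le_rfl (gb ^ 2) (.inl rfl)
  have hc := h .klein le_rfl (gc ^ 2) (.inr (.inl rfl))
  have hd := h .klein le_rfl (gd ^ 2) (.inr (.inr (.inl rfl)))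
  have hbcd := h .klein le_rfl (gb * gc * gd) (.inr (.inr (.inr rfl)))
  rw [map_pow, pow_two] at hb hc hd
  have hb_eq : f gb = f gc * f gd := by
    rw [← inv_eq_of_mul_eq_one_right hb]
    exact inv_eq_of_mul_eq_one_right (by simpa [mul_assoc] using hbcd)
  have hdc : f gd * f gc = f gc * f gd := by
    calc f gd * f gc = (f gc * f gd)⁻¹ := by
          rw [mul_inv_rev, inv_eq_of_mul_eq_one_right hc, inv_eq_of_mul_eq_one_right hd]
      _ = f gc * f gd := by rw [← hb_eq, inv_eq_of_mul_eq_one_right hb]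
  exact ⟨by simpa [pow_two] using h .aSq le_rfl _ rfl, hc, hd, hb_eq, hdc⟩

lemma KillsShallow.of_relators (h : ∀ c, 1 ≤ shallow c → ∀ r ∈ relators c, f r = 1) :
    KillsShallow f where
  toKillsBasic := .of_relators fun c hc ↦ h c (hc.trans (basic_le_shallow c))
  ad_pow := by simpa using h (.fourth 0) le_rfl _ (.inl rfl)
  adacac_pow := by simpa using h (.fourth 0) le_rfl _ (.inr rfl)
  acac_pow := by simpa [mul_assoc] using h (.fourth 1) le_rfl _ (.inl rfl)

namespace KillsBasic

lemma a_cancel (hf : KillsBasic f) (x : G) : f ga * (f ga * x) = x :=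
  mul_self_cancel_left hf.a_mul_a x

lemma c_cancel (hf : KillsBasic f) (x : G) : f gc * (f gc * x) = x :=
  mul_self_cancel_left hf.c_mul_c x

lemma d_cancel (hf : KillsBasic f) (x : G) : f gd * (f gd * x) = x :=
  mul_self_cancel_left hf.d_mul_d x

lemma d_left_comm (hf : KillsBasic f) (x : G) : f gd * (f gc * x) = f gc * (f gd * x) := by
  rw [← mul_assoc, hf.d_mul_c, mul_assoc]

lemma a_inv (hf : KillsBasic f) : (f ga)⁻¹ = f ga := inv_eq_of_mul_eq_one_right hf.a_mul_a

lemma c_inv (hf : KillsBasic f) : (f gc)⁻¹ = f gc := inv_eq_of_mul_eq_one_right hf.c_mul_c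

lemma d_inv (hf : KillsBasic f) : (f gd)⁻¹ = f gd := inv_eq_of_mul_eq_one_right hf.d_mul_d

end KillsBasic

lemma KillsShallow.da_pow (hf : KillsShallow f) : (f gd * f ga) ^ 4 = 1 := by
  rw [← inv_eq_one, ← inv_pow, mul_inv_rev, hf.a_inv, hf.d_inv, hf.ad_pow]

end Kills

lemma exists_basic_dist {κ : Type*} [Finite κ] {x y : κ → F4}
    (h : ∀ {G : Type} [Group G] {f : F4 →* G}, KillsBasic f → ∀ j, f (x j) = f (y j)) :
    ∃ K, ∀ j, x j ≈[basic, K] y j :=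
  AreaDistLE.exists_uniform _ _ _ _ (h (f := QuotientGroup.mk' _) (.of_relators fun c hc _ hr ↦
    (QuotientGroup.eq_one_iff _).2 (Subgroup.subset_normalClosure ⟨c, hc, hr⟩)))

lemma exists_shallow_dist {κ : Type*} [Finite κ] {x y : κ → F4}
    (h : ∀ {G : Type} [Group G] {f : F4 →* G}, KillsShallow f → ∀ j, f (x j) = f (y j)) :
    ∃ K, ∀ j, x j ≈[shallow, K] y j :=
  AreaDistLE.exists_uniform _ _ _ _ (h (f := QuotientGroup.mk' _) (.of_relators fun c hc _ hr ↦
    (QuotientGroup.eq_one_iff _).2 (Subgroup.subset_normalClosure ⟨c, hc, hr⟩)))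

/-! ### Words and sections of stabiliser words -/

instance : Fintype L4 := ⟨{.a, .b, .c, .d}, fun x ↦ by cases x <;> simp⟩

/-- The element of the free group represented by a positive word. -/
def wordVal (w : List L4) : F4 := (w.map FreeGroup.of).prod

@[simp] lemma wordVal_nil : wordVal [] = 1 := rfl

@[simp] lemma wordVal_cons (x : L4) (w : List L4) :
    wordVal (x :: w) = FreeGroup.of x * wordVal w := by simp [wordVal]

@[simp] lemma wordVal_append (w w' : List L4) : wordVal (w ++ w') = wordVal w * wordVal w' := by
  simp [wordVal]

lemma of_a : FreeGroup.of L4.a = ga := rfl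

lemma of_b : FreeGroup.of L4.b = gb := rfl

lemma of_c : FreeGroup.of L4.c = gc := rfl

lemma of_d : FreeGroup.of L4.d = gd := rfl

/-- The letters `b`, `c`, `d`, which generate a Klein four-group modulo the relators. -/
inductive KleinLetter : Type
  | b
  | c
  | d
  deriving DecidableEq

instance : Fintype KleinLetter := ⟨{.b, .c, .d}, fun v ↦ by cases v <;> simp⟩

/-- The letter as an element of the alphabet. -/
def KleinLetter.toL4 : KleinLetter → L4
  | .b => .b
  | .c => .c
  | .d => .d

/-- The letters of the stabiliser of the first level of the binary tree: `(false, v)` stands for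
`v` and `(true, v)` for `a v a`. -/
abbrev StabLetter : Type := Bool × KleinLetter

namespace StabLetter

/-- The element of the free group represented by a letter of the stabiliser. -/
def val : StabLetter → F4
  | (false, v) => FreeGroup.of v.toL4
  | (true, v) => ga * FreeGroup.of v.toL4 * ga

/-- The action of a letter of the stabiliser on the right subtree, as a word. -/
def rightSection : StabLetter → List L4
  | (false, .b) => [.c]
  | (false, .c) => [.d]
  | (false, .d) => [.b]
  | (true, .b) => [.a]
  | (true, .c) => [.a]
  | (true, .d) => []

/-- The action of a letter of the stabiliser on the left subtree, as a word; conjugation by `a`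
exchanges the two subtrees. -/
def leftSection (y : StabLetter) : List L4 := rightSection (!y.1, y.2)

lemma length_rightSection_le (y : StabLetter) : y.rightSection.length ≤ 1 := by
  revert y
  decide

lemma length_leftSection_le (y : StabLetter) : y.leftSection.length ≤ 1 :=
  length_rightSection_le _

end StabLetter

/-- The element of the free group represented by a word in the letters of the stabiliser. -/
def stabVal (Y : List StabLetter) : F4 := (Y.map StabLetter.val).prod

@[simp] lemma stabVal_nil : stabVal [] = 1 := rfl

@[simp] lemma stabVal_cons (y : StabLetter) (Y : List StabLetter) :
    stabVal (y :: Y) = y.val * stabVal Y := by simp [stabVal]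

lemma length_flatMap_le {α β : Type*} {f : α → List β} (hf : ∀ x, (f x).length ≤ 1) (l : List α) :
    (l.flatMap f).length ≤ l.length := by
  rw [List.length_flatMap]
  simpa using List.sum_le_card_nsmul (l.map fun x ↦ (f x).length) 1 (by simpa using fun x _ ↦ hf x)

/-! ### Recombining a stabiliser word from its sections -/

/-- The image in the dihedral group of order `8` common to both sections of a letter. -/
def StabLetter.dihedralPart : StabLetter → DihedralGroup 4
  | (_, .d) => 1
  | (false, _) => .sr 1
  | (true, _) => .sr 0

/-- A word for each element of the dihedral group generated by `aca` and `c`, with `sr 0 ↦ aca`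
and `sr 1 ↦ c`. -/
def dihedralWord : DihedralGroup 4 → F4
  | .r i => (ga * gc * ga * gc) ^ i.val
  | .sr i => ga * gc * ga * (ga * gc * ga * gc) ^ i.val

@[simp] lemma dihedralWord_one : dihedralWord 1 = 1 := pow_zero _

/-- What remains of a letter of the stabiliser after splitting off the image under `σ` of its right
section. -/
def StabLetter.residue : StabLetter → F4
  | (true, .b) => ga * gd * ga
  | (true, .d) => ga * gd * ga
  | _ => 1

/-- The residue of a letter conjugated by an element of the dihedral group. -/
def twistedResidue (g : DihedralGroup 4) (y : StabLetter) : F4 :=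
  dihedralWord g * y.residue * (dihedralWord g)⁻¹

@[simp] lemma twistedResidue_one (y : StabLetter) : twistedResidue 1 y = y.residue := by
  simp [twistedResidue]

section Letters

variable {G : Type*} [Group G] {f : F4 →* G}

lemma KillsBasic.map_val (hf : KillsBasic f) (y : StabLetter) :
    f y.val = f (sigma (wordVal y.rightSection) * y.residue) := by
  obtain ⟨_ | _, _ | _ | _⟩ := y <;>
    simp [StabLetter.val, StabLetter.rightSection, StabLetter.residue, KleinLetter.toL4, of_a, of_b,
      of_c, of_d, mul_assoc, hf.b_eq, hf.a_cancel]

namespace KillsShallow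

lemma aca_mul_aca (hf : KillsShallow f) : f (ga * gc * ga) * f (ga * gc * ga) = 1 := by
  simp [mul_assoc, hf.a_cancel, hf.c_cancel, hf.a_mul_a]

/-- The homomorphism from the dihedral group of order `8` onto the image of the subgroup generated
by `aca` and `c`. -/
def dihedral (hf : KillsShallow f) : DihedralGroup 4 →* G :=
  dihedralLift 4 hf.aca_mul_aca hf.c_mul_c (by simpa using hf.acac_pow)

lemma map_dihedralWord (hf : KillsShallow f) (g : DihedralGroup 4) :
    f (dihedralWord g) = hf.dihedral g := by
  cases g <;> simp [dihedralWord, dihedral, dihedralLift_r, dihedralLift_sr]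

@[simp] lemma dihedral_sr_zero (hf : KillsShallow f) :
    hf.dihedral (.sr 0) = f (ga * gc * ga) := by
  simp [dihedral, dihedralLift_sr]

@[simp] lemma dihedral_sr_one (hf : KillsShallow f) : hf.dihedral (.sr 1) = f gc := by
  have val_one : (1 : ZMod 4).val = 1 := rfl
  simp [dihedral, dihedralLift_sr, val_one, mul_assoc, hf.a_cancel, hf.c_cancel]

lemma map_rightSection (hf : KillsShallow f) (y : StabLetter) :
    f (sigma (wordVal y.rightSection)) = hf.dihedral y.dihedralPart ∨
      f (sigma (wordVal y.rightSection)) = f gd * hf.dihedral y.dihedralPart := by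
  obtain ⟨_ | _, _ | _ | _⟩ := y <;>
    simp [StabLetter.rightSection, StabLetter.dihedralPart, of_a, of_b, of_c, of_d, hf.b_eq,
      hf.d_mul_c]

lemma map_leftSection (hf : KillsShallow f) (y : StabLetter) :
    f (ga * sigma (wordVal y.leftSection) * ga⁻¹) =
      hf.dihedral y.dihedralPart * f y.residue := by
  obtain ⟨_ | _, _ | _ | _⟩ := y <;>
    simp [StabLetter.leftSection, StabLetter.rightSection, StabLetter.dihedralPart,
      StabLetter.residue, of_a, of_b, of_c, of_d, mul_assoc, hf.b_eq, hf.a_inv,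
      hf.a_cancel]

-- This is where the relator `(ad)⁴` is used.
lemma commute_d_ada (hf : KillsShallow f) : Commute (f gd) (f (ga * gd * ga)) := by
  refine commute_of_mul_mul_mul_eq_one hf.d_mul_d ?_ ?_
  · simp [mul_assoc, hf.a_cancel, hf.d_cancel, hf.a_mul_a]
  · calc f gd * f (ga * gd * ga) * (f gd * f (ga * gd * ga))
        = f ga * (f ga * f gd) ^ 4 * f ga := by simp [pow_succ, mul_assoc, hf.a_cancel]
      _ = 1 := by rw [hf.ad_pow, mul_one, hf.a_mul_a]

-- This is where the relator `(adacac)⁴` is used.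
lemma commute_d_conj_acac (hf : KillsShallow f) :
    Commute (f gd) (f (ga * gc * ga * gc * (ga * gd * ga) * (ga * gc * ga * gc)⁻¹)) := by
  refine commute_of_mul_mul_mul_eq_one hf.d_mul_d ?_ ?_
  · simp [mul_assoc, hf.a_cancel, hf.d_cancel]
  · calc f gd * f (ga * gc * ga * gc * (ga * gd * ga) * (ga * gc * ga * gc)⁻¹) *
          (f gd * f (ga * gc * ga * gc * (ga * gd * ga) * (ga * gc * ga * gc)⁻¹))
        = f ga * (f ga * f gd * f ga * f gc * f ga * f gc) ^ 4 * f ga := by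
          simp [pow_succ, mul_assoc, hf.a_cancel, hf.a_inv, hf.c_inv]
      _ = 1 := by rw [hf.adacac_pow, mul_one, hf.a_mul_a]

lemma commute_aca_ada (hf : KillsShallow f) :
    Commute (f (ga * gc * ga)) (f (ga * gd * ga)) := by
  simp [Commute, SemiconjBy, mul_assoc, hf.a_cancel, hf.d_left_comm]

-- The double cosets of `⟨c⟩` and `⟨aca⟩` in the dihedral group are represented by `1` and `acac`.
lemma commute_d_conj_dihedral (hf : KillsShallow f) (g : DihedralGroup 4) :
    Commute (f gd) (hf.dihedral g * f (ga * gd * ga) * (hf.dihedral g)⁻¹) := by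
  have double_coset : ∀ g : DihedralGroup 4, ∃ i m j : Fin 2,
      g = .sr 1 ^ i.val * (.sr 0 * .sr 1) ^ m.val * .sr 0 ^ j.val := by decide
  obtain ⟨i, m, j, rfl⟩ := double_coset g
  have hc : Commute (f gd) (f gc ^ i.val) := Commute.pow_right hf.d_mul_c _
  have haca : f (ga * gc * ga) ^ j.val * f (ga * gd * ga) * (f (ga * gc * ga) ^ j.val)⁻¹ =
      f (ga * gd * ga) := by
    rw [(hf.commute_aca_ada.pow_left _).eq, mul_inv_cancel_right]
  have hm : Commute (f gd) ((f (ga * gc * ga) * f gc) ^ m.val * f (ga * gd * ga) *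
      ((f (ga * gc * ga) * f gc) ^ m.val)⁻¹) := by
    fin_cases m
    · simpa using hf.commute_d_ada
    · simpa using hf.commute_d_conj_acac
  have hconj := (hc.mul_right hm).mul_right hc.inv_right
  rw [map_mul, map_mul, map_pow, map_pow, map_pow, map_mul, dihedral_sr_zero, dihedral_sr_one]
  rw [← haca] at hconj
  simpa only [mul_inv_rev, mul_assoc] using hconj

lemma map_twistedResidue (hf : KillsShallow f) (g : DihedralGroup 4) (y : StabLetter) :
    f (twistedResidue g y) = hf.dihedral g * f y.residue * (hf.dihedral g)⁻¹ := by
  simp [twistedResidue, hf.map_dihedralWord]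

lemma commute_d_twistedResidue (hf : KillsShallow f) (g : DihedralGroup 4) (y : StabLetter) :
    Commute (f gd) (f (twistedResidue g y)) := by
  rw [map_twistedResidue]
  obtain ⟨_ | _, _ | _ | _⟩ := y <;>
    first
    | exact hf.commute_d_conj_dihedral g
    | simp [StabLetter.residue]

lemma map_rightSection_mul_twistedResidue (hf : KillsShallow f) (y z : StabLetter)
    (g : DihedralGroup 4) :
    f (sigma (wordVal y.rightSection) * twistedResidue g z) =
      f (twistedResidue (y.dihedralPart * g) z * sigma (wordVal y.rightSection)) := by
  have hy : hf.dihedral y.dihedralPart * f (twistedResidue g z) =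
      f (twistedResidue (y.dihedralPart * g) z) * hf.dihedral y.dihedralPart := by
    simp [hf.map_twistedResidue, mul_assoc]
  rw [map_mul, map_mul]
  obtain h | h := hf.map_rightSection y
  · rw [h, hy]
  · rw [h, mul_assoc, hy, ← mul_assoc, (hf.commute_d_twistedResidue _ z).eq, mul_assoc]

lemma map_twistedResidue_mul_dihedralWord_inv (hf : KillsShallow f) (y : StabLetter)
    (g : DihedralGroup 4) :
    f (twistedResidue g⁻¹ y * (dihedralWord g)⁻¹) =
      f ((dihedralWord (y.dihedralPart * g))⁻¹ * (ga * sigma (wordVal y.leftSection) * ga⁻¹)) := by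
  rw [map_mul, map_mul, map_inv, map_inv, hf.map_leftSection, hf.map_twistedResidue,
    hf.map_dihedralWord, hf.map_dihedralWord, map_mul, map_inv]
  group

end KillsShallow

end Letters

/-- The image of a stabiliser word in the dihedral group common to both of its sections. -/
def dihedralProd (Y : List StabLetter) : DihedralGroup 4 := (Y.map StabLetter.dihedralPart).prod

lemma dihedralProd_cons (y : StabLetter) (Y : List StabLetter) :
    dihedralProd (y :: Y) = y.dihedralPart * dihedralProd Y := by simp [dihedralProd]

/-- The right section of a stabiliser word. -/
def rightSections (Y : List StabLetter) : List L4 := Y.flatMap StabLetter.rightSection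

lemma rightSections_cons (y : StabLetter) (Y : List StabLetter) :
    rightSections (y :: Y) = y.rightSection ++ rightSections Y := List.flatMap_cons

/-- The left section of a stabiliser word. -/
def leftSections (Y : List StabLetter) : List L4 := Y.flatMap StabLetter.leftSection

lemma exists_rightSections_mul_twistedResidue_dist :
    ∃ K, ∀ (Y : List StabLetter) (g : DihedralGroup 4) (z : StabLetter),
      sigma (wordVal (rightSections Y)) * twistedResidue g z ≈[shallow, K * Y.length]
        twistedResidue (dihedralProd Y * g) z * sigma (wordVal (rightSections Y)) := by
  obtain ⟨K, hK⟩ := exists_shallow_dist (κ := StabLetter × StabLetter × DihedralGroup 4)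
    fun hf j ↦ hf.map_rightSection_mul_twistedResidue j.1 j.2.1 j.2.2
  refine ⟨K, fun Y g z ↦ ?_⟩
  induction Y with
  | nil => simpa [rightSections, dihedralProd] using AreaDistLE.refl _ _
  | cons y Y ih =>
    let ry := sigma (wordVal y.rightSection)
    let rY := sigma (wordVal (rightSections Y))
    have hy := hK (y, z, dihedralProd Y * g)
    have hcost : K * (y :: Y).length = K * Y.length + K := by simp [mul_add]
    rw [hcost, rightSections_cons, wordVal_append, map_mul, dihedralProd_cons, mul_assoc]
    calc ry * (rY * twistedResidue g z)
        ≈[shallow, K * Y.length] ry * (twistedResidue (dihedralProd Y * g) z * rY) := ih.mul_left _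
      _ = ry * twistedResidue (dihedralProd Y * g) z * rY := (mul_assoc ..).symm
      _ ≈[shallow, K] twistedResidue (y.dihedralPart * (dihedralProd Y * g)) z * ry * rY :=
        hy.mul_right _
      _ = twistedResidue (y.dihedralPart * dihedralProd Y * g) z * (ry * rY) := by
        simp only [mul_assoc]

lemma exists_stabVal_dist_sections :
    ∃ K, ∀ Y : List StabLetter, stabVal Y ≈[shallow, K * (Y.length + 1) ^ 2]
      sigma (wordVal (rightSections Y)) * (dihedralWord (dihedralProd Y))⁻¹ *
        (ga * sigma (wordVal (leftSections Y)) * ga⁻¹) := by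
  obtain ⟨K₁, hval⟩ := exists_shallow_dist (κ := StabLetter) fun hf y ↦ hf.map_val y
  obtain ⟨K₂, hswap⟩ := exists_rightSections_mul_twistedResidue_dist
  obtain ⟨K₃, hleft⟩ := exists_shallow_dist (κ := StabLetter × DihedralGroup 4)
    fun hf j ↦ hf.map_twistedResidue_mul_dihedralWord_inv j.1 j.2
  let K := K₁ + K₂ + K₃
  refine ⟨K, fun Y ↦ ?_⟩
  induction Y with
  | nil => simpa [rightSections, leftSections, dihedralProd] using AreaDistLE.refl _ _
  | cons y Y ih =>
    have hswap := hswap Y (dihedralProd Y)⁻¹ y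
    rw [mul_inv_cancel, twistedResidue_one] at hswap
    have hleftSections : ga * sigma (wordVal (leftSections (y :: Y))) * ga⁻¹ =
        ga * sigma (wordVal y.leftSection) * ga⁻¹ *
          (ga * sigma (wordVal (leftSections Y)) * ga⁻¹) := by
      simp [leftSections, mul_assoc]
    have hcost : K₁ + K * (Y.length + 1) ^ 2 + K₂ * Y.length + K₃ ≤
        K * ((y :: Y).length + 1) ^ 2 := by
      simp only [List.length_cons, K]
      nlinarith
    rw [hleftSections, stabVal_cons, rightSections_cons, wordVal_append, map_mul,
      dihedralProd_cons]
    exact ((hval y).interleave ih hswap.symm (hleft (y, dihedralProd Y))).mono hcost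

/-! ### Homomorphisms trivial on `N(∞)` -/

/-- The subgroup `N(∞)` of the free group. -/
abbrev Ninf : Subgroup F4 := Subgroup.normalClosure Rinf

section Kernel

variable {G : Type*} [Group G] {f : F4 →* G}

lemma KillsShallow.of_ninf_le_ker (h : Ninf ≤ f.ker) : KillsShallow f :=
  .of_relators fun c _ _ hr ↦ h (Subgroup.subset_normalClosure
    (iUnion_relators ▸ Set.mem_iUnion_of_mem c hr))

-- A relator of positive height is `σ (h ^ 4)` for some `h ^ 4 ∈ N(∞)`.
lemma KillsShallow.ninf_le_ker (hf : KillsShallow f)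
    (hσ : ∀ h, h ^ 4 ∈ Ninf → f (sigma h) ^ 4 = 1) : Ninf ≤ f.ker := by
  have iterate_pow (i : ℕ) (g : F4) : (⇑sigma)^[i] (g ^ 4) = (⇑sigma)^[i] g ^ 4 := by
    simp
  have height_pos {i : ℕ} {g : F4} (hg : (⇑sigma)^[i] (g ^ 4) ∈ Rinf) :
      f ((⇑sigma)^[i + 1] (g ^ 4)) = 1 := by
    rw [iterate_pow] at hg
    rw [iterate_pow, Function.iterate_succ_apply', map_pow]
    exact hσ _ (Subgroup.subset_normalClosure hg)
  refine Subgroup.normalClosure_le_normal fun r hr ↦ ?_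
  rw [SetLike.mem_coe, MonoidHom.mem_ker]
  obtain (hr | ⟨_ | i, rfl⟩) | ⟨_ | i, rfl⟩ := hr
  · simp only [Set.mem_insert_iff, Set.mem_singleton_iff] at hr
    obtain rfl | rfl | rfl | rfl | rfl := hr <;>
      simp [pow_two, mul_assoc, hf.b_eq, hf.a_mul_a, hf.c_mul_c, hf.d_mul_d, hf.d_left_comm]
  · simpa using hf.ad_pow
  · exact height_pos (.inl (.inr ⟨i, rfl⟩))
  · simpa using hf.adacac_pow
  · exact height_pos (.inr ⟨i, rfl⟩)

lemma pow_four_eq_one_of_dihedral (ha : f ga * f ga = 1) (hb : f gb = 1) (hc : f gc * f gc = 1)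
    (hd : f gd = f gc) (hac : (f ga * f gc) ^ 4 = 1) (g : F4) : f g ^ 4 = 1 := by
  have val_one : (1 : ZMod 4).val = 1 := rfl
  let π : F4 →* DihedralGroup 4 := genLift (.sr 0) 1 (.sr 1) (.sr 1)
  have hf : f = (dihedralLift 4 ha hc hac).comp π := by
    apply hom_ext_generators <;>
      simp [π, dihedralLift_sr, hb, hd, val_one, mul_self_cancel_left ha]
  have hπ : π g ^ 4 = 1 := by
    have hexp : Monoid.exponent (DihedralGroup 4) = 4 := DihedralGroup.exponent
    simpa only [hexp] using Monoid.pow_exponent_eq_one (π g)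
  rw [hf, MonoidHom.comp_apply, ← map_pow, hπ, map_one]

end Kernel

/-- The quotient of the Grigorchuk group onto a dihedral group of order `16` that kills `d`. -/
def modD : F4 →* DihedralGroup 8 := genLift (.sr 0) (.sr 1) (.sr 1) 1

lemma killsShallow_modD : KillsShallow modD := by
  constructor <;> try constructor
  all_goals
    simp only [modD, genLift_ga, genLift_gb, genLift_gc, genLift_gd]
    decide

lemma ninf_le_ker_modD : Ninf ≤ modD.ker :=
  killsShallow_modD.ninf_le_ker fun h _ ↦
    pow_four_eq_one_of_dihedral (f := modD.comp sigma)
      (by simp [modD]) (by simp [modD]) (by simp [modD]) (by simp [modD])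
      (by simpa [modD] using killsShallow_modD.acac_pow) h

lemma modD_val (y : StabLetter) :
    modD y.val = killsShallow_modD.dihedral y.dihedralPart := by
  have hd : modD gd = 1 := by simp [modD]
  have hresidue : modD y.residue = 1 := by
    obtain ⟨_ | _, _ | _ | _⟩ := y <;> simp [StabLetter.residue, hd, killsShallow_modD.a_mul_a]
  rw [killsShallow_modD.map_val, map_mul, hresidue, mul_one]
  obtain h | h := killsShallow_modD.map_rightSection y
  · exact h
  · rw [h, hd, one_mul]

lemma modD_stabVal (Y : List StabLetter) :
    modD (stabVal Y) = killsShallow_modD.dihedral (dihedralProd Y) := by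
  simp only [stabVal, dihedralProd, map_list_prod, List.map_map, Function.comp_def, modD_val]

lemma eq_one_of_dihedral_modD_eq_one :
    ∀ {g : DihedralGroup 4}, killsShallow_modD.dihedral g = 1 → g = 1 := by
  simp_rw [← KillsShallow.map_dihedralWord]
  decide

lemma dihedralProd_eq_one {Y : List StabLetter} (hY : stabVal Y ∈ Ninf) : dihedralProd Y = 1 :=
  eq_one_of_dihedral_modD_eq_one (modD_stabVal Y ▸ ninf_le_ker_modD hY)

/-! ### Sections of stabiliser words in `N(∞)` -/

/-- The permutation of two copies of a group acting on each copy by a left translation. -/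
def translationPerm {Q : Type*} [Group Q] : (Bool → Q) →* Equiv.Perm (Bool × Q) :=
  MonoidHom.mk' (fun x ↦ Equiv.prodShear (Equiv.refl _) fun s ↦ Equiv.mulLeft (x s)) fun x y ↦ by
    ext1 ⟨s, q⟩
    simp

@[simp] lemma translationPerm_apply {Q : Type*} [Group Q] (x : Bool → Q) (s : Bool) (q : Q) :
    translationPerm x (s, q) = (s, x s * q) := rfl

/-- The permutation exchanging two copies of a set. -/
def swapPerm {Q : Type*} : Equiv.Perm (Bool × Q) := Equiv.prodCongr Equiv.boolNot (Equiv.refl _)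

@[simp] lemma swapPerm_apply {Q : Type*} (s : Bool) (q : Q) : swapPerm (s, q) = (!s, q) := rfl

/-- The projection of the free group onto the quotient by `N(∞)`, the Grigorchuk group. -/
def proj : F4 →* F4 ⧸ Ninf := QuotientGroup.mk' Ninf

lemma proj_eq_one_iff {g : F4} : proj g = 1 ↔ g ∈ Ninf := QuotientGroup.eq_one_iff g

lemma killsShallow_proj : KillsShallow proj := .of_ninf_le_ker (QuotientGroup.ker_mk' _).ge

/-- The element of the quotient by `N(∞)` represented by the section of a letter of the stabiliser
on the right subtree, indexed by `true`, or on the left one, indexed by `false`. -/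
def StabLetter.sectionClass (y : StabLetter) (s : Bool) : F4 ⧸ Ninf :=
  proj (wordVal (StabLetter.rightSection (s ^^ !y.1, y.2)))

/-- The action on two copies of the quotient by `N(∞)` given by the wreath recursion. -/
def wreathAction : F4 →* Equiv.Perm (Bool × (F4 ⧸ Ninf)) :=
  genLift swapPerm (translationPerm (StabLetter.sectionClass (false, .b)))
    (translationPerm (StabLetter.sectionClass (false, .c)))
    (translationPerm (StabLetter.sectionClass (false, .d)))

/-- The section of `σ (g)` on the left subtree, which takes values in a dihedral group of order
`8`. -/
def leftSectionSigma : F4 →* F4 ⧸ Ninf := genLift (proj gd) 1 (proj ga) (proj ga)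

lemma wreathAction_val (y : StabLetter) :
    wreathAction y.val = translationPerm y.sectionClass := by
  ext1 ⟨s, q⟩
  obtain ⟨_ | _, _ | _ | _⟩ := y <;>
    simp [StabLetter.val, KleinLetter.toL4, of_b, of_c, of_d, wreathAction,
      StabLetter.sectionClass]

lemma wreathAction_stabVal (Y : List StabLetter) :
    wreathAction (stabVal Y) = translationPerm (Y.map StabLetter.sectionClass).prod := by
  simp only [stabVal, map_list_prod, List.map_map, Function.comp_def, wreathAction_val]

lemma wreathAction_sigma (g : F4) :
    wreathAction (sigma g) =
      translationPerm fun s ↦ if s then proj g else leftSectionSigma g := by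
  let sections : F4 →* Bool → F4 ⧸ Ninf :=
    { toFun := fun g s ↦ if s then proj g else leftSectionSigma g
      map_one' := by ext (_ | _) <;> simp
      map_mul' := fun g h ↦ by ext (_ | _) <;> simp }
  suffices h : wreathAction.comp sigma = translationPerm.comp sections from
    DFunLike.congr_fun h g
  apply hom_ext_generators <;> ext1 ⟨_ | _, q⟩ <;>
    simp [sections, wreathAction, StabLetter.sectionClass, StabLetter.rightSection,
      leftSectionSigma, of_a, of_b, of_c, of_d]

lemma killsShallow_wreathAction : KillsShallow wreathAction := by
  have hq := killsShallow_proj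
  have ad_pow (q : F4 ⧸ Ninf) : (proj ga * proj gd) ^ 4 * q = q := by rw [hq.ad_pow, one_mul]
  have da_pow (q : F4 ⧸ Ninf) : (proj gd * proj ga) ^ 4 * q = q := by rw [hq.da_pow, one_mul]
  simp only [pow_succ, pow_zero, one_mul, mul_assoc] at ad_pow da_pow
  constructor <;> try constructor
  all_goals
    ext1 ⟨_ | _, q⟩
    all_goals
    simp [wreathAction, StabLetter.sectionClass, StabLetter.rightSection, of_a, of_b, of_c, of_d,
      pow_succ, mul_assoc, hq.b_eq, hq.d_left_comm, hq.a_cancel, hq.c_cancel, hq.d_cancel, ad_pow,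
      da_pow]

lemma ninf_le_ker_wreathAction : Ninf ≤ wreathAction.ker := by
  have hq := killsShallow_proj
  refine killsShallow_wreathAction.ninf_le_ker fun h hh ↦ ?_
  have hleft : leftSectionSigma h ^ 4 = 1 :=
    pow_four_eq_one_of_dihedral (by simpa [leftSectionSigma] using hq.d_mul_d)
      (by simp [leftSectionSigma]) (by simpa [leftSectionSigma] using hq.a_mul_a)
      (by simp [leftSectionSigma]) (by simpa [leftSectionSigma] using hq.da_pow) h
  have hright : proj h ^ 4 = 1 := by rwa [← map_pow, proj_eq_one_iff]
  rw [wreathAction_sigma, ← map_pow, ← map_one translationPerm]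
  congr 1
  ext (_ | _) <;> simp [hleft, hright]

lemma prod_sectionClass_eq_one {Y : List StabLetter} (hY : stabVal Y ∈ Ninf) (s : Bool) :
    (Y.map (StabLetter.sectionClass · s)).prod = 1 := by
  have hact : wreathAction (stabVal Y) = 1 := ninf_le_ker_wreathAction hY
  rw [wreathAction_stabVal] at hact
  simpa [Pi.list_prod_apply, Function.comp_def] using DFunLike.congr_fun hact (s, 1)

lemma wordVal_flatMap {α : Type*} (f : α → List L4) (l : List α) :
    wordVal (l.flatMap f) = (l.map fun x ↦ wordVal (f x)).prod := by
  induction l <;> simp [*]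

lemma rightSections_mem_ninf {Y : List StabLetter} (hY : stabVal Y ∈ Ninf) :
    wordVal (rightSections Y) ∈ Ninf := by
  simpa [← proj_eq_one_iff, rightSections, wordVal_flatMap, StabLetter.sectionClass,
    map_list_prod, Function.comp_def] using prod_sectionClass_eq_one hY true

lemma leftSections_mem_ninf {Y : List StabLetter} (hY : stabVal Y ∈ Ninf) :
    wordVal (leftSections Y) ∈ Ninf := by
  simpa [← proj_eq_one_iff, leftSections, StabLetter.leftSection, wordVal_flatMap,
    StabLetter.sectionClass, map_list_prod, Function.comp_def] using
      prod_sectionClass_eq_one hY false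

lemma stabVal_mul_ga_notMem_ninf (Y : List StabLetter) : stabVal Y * ga ∉ Ninf := by
  intro h
  have hfix := DFunLike.congr_fun (ninf_le_ker_wreathAction h : wreathAction _ = 1) (true, 1)
  rw [map_mul, wreathAction_stabVal] at hfix
  simp [wreathAction] at hfix

lemma exists_stabVal_dist_sigma_sections :
    ∃ K, ∀ Y : List StabLetter, stabVal Y ∈ Ninf → stabVal Y ≈[shallow, K * (Y.length + 1) ^ 2]
      sigma (wordVal (rightSections Y)) * (ga * sigma (wordVal (leftSections Y)) * ga⁻¹) := by
  obtain ⟨K, hK⟩ := exists_stabVal_dist_sections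
  refine ⟨K, fun Y hY ↦ ?_⟩
  simpa [dihedralProd_eq_one hY] using hK Y

/-! ### Rewriting positive words as stabiliser words -/

/-- The element `a` or `1` according to whether the two subtrees are exchanged. -/
def aIf (s : Bool) : F4 := if s then ga else 1

/-- For a letter `x`, a stabiliser word `Z` of length at most `1` and an `s'` such that
`aIf s * x = Z * aIf s'` modulo the relators. -/
def splitLetter (s : Bool) : L4 → List StabLetter × Bool
  | .a => ([], !s)
  | .b => ([(s, .b)], s)
  | .c => ([(s, .c)], s)
  | .d => ([(s, .d)], s)

/-- For letters `x` and `y`, a stabiliser word `Z` of length at most `1` and an `s'` such that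
`aIf s * (x * y) = Z * aIf s'` modulo the relators. -/
def splitPair (s : Bool) : L4 → L4 → List StabLetter × Bool
  | .a, .a | .b, .b | .c, .c | .d, .d => ([], s)
  | .a, y => splitLetter (!s) y
  | x, .a => ((splitLetter s x).1, !s)
  | .c, .d | .d, .c => ([(s, .b)], s)
  | .b, .d | .d, .b => ([(s, .c)], s)
  | .b, .c | .c, .b => ([(s, .d)], s)

lemma length_splitLetter_le (s : Bool) (x : L4) : (splitLetter s x).1.length ≤ 1 := by
  revert s x
  decide

lemma length_splitPair_le (s : Bool) (x y : L4) : (splitPair s x y).1.length ≤ 1 := by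
  revert s x y
  decide

section Split

variable {G : Type*} [Group G] {f : F4 →* G}

lemma KillsBasic.map_splitLetter (hf : KillsBasic f) (s : Bool) (x : L4) :
    f (aIf s * FreeGroup.of x) =
      f (stabVal (splitLetter s x).1 * aIf (splitLetter s x).2) := by
  cases s <;> cases x <;>
    simp [splitLetter, aIf, StabLetter.val, KleinLetter.toL4, of_a, of_b, of_c, of_d, mul_assoc,
      hf.a_mul_a]

lemma KillsBasic.map_splitPair (hf : KillsBasic f) (s : Bool) (x y : L4) :
    f (aIf s * (FreeGroup.of x * FreeGroup.of y)) =
      f (stabVal (splitPair s x y).1 * aIf (splitPair s x y).2) := by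
  cases s <;> cases x <;> cases y <;>
    simp [splitPair, splitLetter, aIf, StabLetter.val, KleinLetter.toL4, of_a, of_b, of_c, of_d,
      mul_assoc, hf.b_eq, hf.a_mul_a, hf.c_mul_c, hf.d_mul_d, hf.d_mul_c, hf.a_cancel, hf.c_cancel,
      hf.d_left_comm]

end Split

lemma exists_wordVal_dist_stabVal :
    ∃ K, ∀ (w : List L4) (s : Bool), ∃ (Y : List StabLetter) (s' : Bool),
      2 * Y.length ≤ w.length + 1 ∧
        aIf s * wordVal w ≈[basic, K * w.length] stabVal Y * aIf s' := by
  obtain ⟨K₁, hletter⟩ := exists_basic_dist (κ := Bool × L4) fun hf j ↦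
    hf.map_splitLetter j.1 j.2
  obtain ⟨K₂, hpair⟩ := exists_basic_dist (κ := Bool × L4 × L4) fun hf j ↦
    hf.map_splitPair j.1 j.2.1 j.2.2
  refine ⟨K₁ + K₂, fun w ↦ ?_⟩
  induction w using List.twoStepInduction with
  | nil => exact fun s ↦ ⟨[], s, by simp, by simpa using AreaDistLE.refl _ _⟩
  | singleton x =>
    intro s
    have hlength := length_splitLetter_le s x
    refine ⟨(splitLetter s x).1, (splitLetter s x).2, by grind, ?_⟩
    simpa using (hletter (s, x)).mono (by simp)
  | cons_cons x y w ih =>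
    intro s
    let Z := (splitPair s x y).1
    let s' := (splitPair s x y).2
    have hZ : Z.length ≤ 1 := length_splitPair_le s x y
    obtain ⟨Y, s'', hlength, hY⟩ := ih s'
    refine ⟨Z ++ Y, s'', by grind, ?_⟩
    have hcost : K₂ + (K₁ + K₂) * w.length ≤ (K₁ + K₂) * (x :: y :: w).length := by
      simp only [List.length_cons]
      linarith
    refine AreaDistLE.mono ?_ hcost
    calc aIf s * wordVal (x :: y :: w)
        = aIf s * (FreeGroup.of x * FreeGroup.of y) * wordVal w := by simp [mul_assoc]
      _ ≈[basic, K₂] stabVal Z * aIf s' * wordVal w := (hpair (s, x, y)).mul_right _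
      _ = stabVal Z * (aIf s' * wordVal w) := mul_assoc ..
      _ ≈[basic, (K₁ + K₂) * w.length] stabVal Z * (stabVal Y * aIf s'') := hY.mul_left _
      _ = stabVal (Z ++ Y) * aIf s'' := by simp [stabVal, mul_assoc]

lemma KillsBasic.map_of_inv {G : Type*} [Group G] {f : F4 →* G} (hf : KillsBasic f) (x : L4) :
    (f (FreeGroup.of x))⁻¹ = f (FreeGroup.of x) := by
  cases x <;>
    simp [of_a, of_b, of_c, of_d, hf.b_eq, hf.a_inv, hf.c_inv, hf.d_inv, hf.d_mul_c]

lemma exists_mk_dist_wordVal :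
    ∃ K, ∀ l : List (L4 × Bool),
      FreeGroup.mk l ≈[basic, K * l.length] wordVal (l.map Prod.fst) := by
  obtain ⟨K, hK⟩ := exists_basic_dist (κ := L4 × Bool) (x := fun j ↦ FreeGroup.mk [j])
    (y := fun j ↦ FreeGroup.of j.1) <| by
    rintro G _ f hf ⟨x, _ | _⟩
    · exact (map_inv f _).trans (hf.map_of_inv x)
    · rfl
  refine ⟨K, fun l ↦ ?_⟩
  induction l with
  | nil => exact AreaDistLE.refl _ _
  | cons j l ih =>
    have h := ((hK j).mul_right (FreeGroup.mk l)).trans (ih.mul_left (FreeGroup.of j.1))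
    rw [FreeGroup.mul_mk] at h
    simpa [mul_add, add_comm] using h

/-! ### Halving the length of a word in `N(∞)` -/

/-- The abelianization of the Grigorchuk group, an elementary abelian group of order `8`. -/
def parity : F4 →* Multiplicative (ZMod 2 × ZMod 2 × ZMod 2) :=
  genLift (.ofAdd (1, 0, 0)) (.ofAdd (0, 1, 0)) (.ofAdd (0, 0, 1)) (.ofAdd (0, 1, 1))

lemma ninf_le_ker_parity : Ninf ≤ parity.ker := by
  have pow_four : ∀ p : Multiplicative (ZMod 2 × ZMod 2 × ZMod 2), p ^ 4 = 1 := by decide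
  have hparity : KillsShallow parity := by
    constructor <;> try constructor
    all_goals
      simp only [parity, genLift_ga, genLift_gb, genLift_gc, genLift_gd]
      decide
  exact hparity.ninf_le_ker fun h _ ↦ pow_four _

lemma parity_of_injective : Function.Injective fun x ↦ parity (FreeGroup.of x) := by
  intro x y
  revert x y
  decide

lemma parity_of_ne_one (x : L4) : parity (FreeGroup.of x) ≠ 1 := by
  revert x
  decide

lemma parity_mul_self (g : F4) : parity g * parity g = 1 :=
  (by decide : ∀ p : Multiplicative (ZMod 2 × ZMod 2 × ZMod 2), p * p = 1) _

lemma eq_nil_or_eq_pair_of_mem_ninf {w : List L4} (hw : w.length ≤ 2) (hN : wordVal w ∈ Ninf) :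
    w = [] ∨ ∃ x, w = [x, x] := by
  have hparity : parity (wordVal w) = 1 := ninf_le_ker_parity hN
  match w with
  | [] => exact .inl rfl
  | [x] => exact absurd (by simpa using hparity) (parity_of_ne_one x)
  | [x, y] =>
    have hxy : parity (FreeGroup.of x) * parity (FreeGroup.of y) = 1 := by simpa using hparity
    rw [← parity_mul_self (FreeGroup.of x)] at hxy
    exact .inr ⟨x, by rw [parity_of_injective (mul_left_cancel hxy)]⟩

lemma AreaDistLE.mem_ninf {u : RelClass → ℕ} {k : ℕ} {x y : F4}
    (h : AreaDistLE relators u k x y) (hx : x ∈ Ninf) : y ∈ Ninf := by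
  rw [Ninf, ← iUnion_relators] at hx ⊢
  exact h.mem_normalClosure hx

lemma exists_wordVal_dist_one_of_length_le_two :
    ∃ K, ∀ w : List L4, w.length ≤ 2 → wordVal w ∈ Ninf → wordVal w ≈[basic, K] 1 := by
  obtain ⟨K, hsq⟩ := exists_basic_dist (x := fun j : L4 ↦ FreeGroup.of j * FreeGroup.of j)
    (y := fun _ ↦ 1) fun {_ _ f} hf j ↦ by
      rw [map_mul, map_one, mul_eq_one_iff_inv_eq, hf.map_of_inv]
  refine ⟨K, fun w hw hN ↦ ?_⟩
  obtain rfl | ⟨x, rfl⟩ := eq_nil_or_eq_pair_of_mem_ninf hw hN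
  · exact AreaDistLE.refl _ _
  · simpa using hsq x

lemma exists_wordVal_dist_halves :
    ∃ K, ∀ (n : ℕ) (w : List L4), 2 ≤ n → w.length ≤ n + 1 → wordVal w ∈ Ninf →
      ∃ w₀ w₁ : List L4, w₀.length ≤ n / 2 + 1 ∧ w₁.length ≤ n / 2 + 1 ∧
        wordVal w₀ ∈ Ninf ∧ wordVal w₁ ∈ Ninf ∧
        wordVal w ≈[shallow, K * n ^ 2] sigma (wordVal w₁) * (ga * sigma (wordVal w₀) * ga⁻¹) := by
  obtain ⟨K₁, hsplit⟩ := exists_wordVal_dist_stabVal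
  obtain ⟨K₂, hsections⟩ := exists_stabVal_dist_sigma_sections
  refine ⟨2 * K₁ + 4 * K₂, fun n w hn hw hN ↦ ?_⟩
  obtain ⟨Y, s, hYw, hY⟩ := hsplit w false
  simp only [aIf, Bool.false_eq_true, if_false, one_mul] at hY
  cases s with
  | true => exact absurd (hY.mem_ninf hN) (stabVal_mul_ga_notMem_ninf Y)
  | false =>
    simp only [Bool.false_eq_true, if_false, mul_one] at hY
    have hYN : stabVal Y ∈ Ninf := hY.mem_ninf hN
    have hYn : Y.length ≤ n / 2 + 1 := by lia
    refine ⟨leftSections Y, rightSections Y,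
      (length_flatMap_le StabLetter.length_leftSection_le Y).trans hYn,
      (length_flatMap_le StabLetter.length_rightSection_le Y).trans hYn,
      leftSections_mem_ninf hYN, rightSections_mem_ninf hYN,
      ((hY.mono_weight basic_le_shallow).trans (hsections Y hYN)).mono ?_⟩
    calc K₁ * w.length + K₂ * (Y.length + 1) ^ 2
        ≤ K₁ * (2 * n ^ 2) + K₂ * (2 * n) ^ 2 := by
          gcongr
          · nlinarith
          · lia
      _ = (2 * K₁ + 4 * K₂) * n ^ 2 := by ring

/-! ### The recursion -/

/-- The relator counts obtained for words of length at most `l + 1` in `N(∞)`, up to the overall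
constant `K`. The clause for `fourth 0`, sharper than the general one for fourth powers, leaves room
for the relators of height `1` that each halving of the word introduces. -/
structure CostBound (K l : ℕ) (v : RelClass → ℕ) : Prop where
  aSq_le : v .aSq ≤ K * l ^ 2 * (Nat.log 2 l + 1)
  klein_le : v .klein ≤ K * l ^ 2 * (Nat.log 2 l + 1)
  fourth_zero_le : v (.fourth 0) ≤ K * l ^ 2
  two_pow_mul_fourth_le (i : ℕ) : 2 ^ i * v (.fourth i) ≤ 4 * (K * l ^ 2)
  fourth_eq_zero {i : ℕ} : l < 2 ^ i → v (.fourth i) = 0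

lemma four_mul_half_sq_le (K l : ℕ) : 4 * (K * (l / 2) ^ 2) ≤ K * l ^ 2 := by
  calc 4 * (K * (l / 2) ^ 2) = K * (2 * (l / 2)) ^ 2 := by ring
    _ ≤ K * l ^ 2 := by gcongr; exact Nat.mul_div_le l 2

namespace CostBound

variable {K K' l m : ℕ} {v v₀ v₁ : RelClass → ℕ}

lemma smul_basic : CostBound K 1 (K • basic) := by
  constructor <;> simp [basic]

lemma mono (h : CostBound K l v) (hK : K ≤ K') : CostBound K' l v where
  aSq_le := h.aSq_le.trans (by gcongr)
  klein_le := h.klein_le.trans (by gcongr)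
  fourth_zero_le := h.fourth_zero_le.trans (by gcongr)
  two_pow_mul_fourth_le i := (h.two_pow_mul_fourth_le i).trans (by gcongr)
  fourth_eq_zero := h.fourth_eq_zero

lemma smul_basic_add (hm : m ≤ K' * l ^ 2) (h : CostBound K l v) :
    CostBound (K' + K) l (m • basic + v) := by
  have hlog : m ≤ K' * l ^ 2 * (Nat.log 2 l + 1) := hm.trans (Nat.le_mul_of_pos_right _ (by simp))
  constructor
  · simpa [basic, add_mul] using add_le_add hlog h.aSq_le
  · simpa [basic, add_mul] using add_le_add hlog h.klein_le
  · simpa [basic, add_mul] using h.fourth_zero_le.trans (Nat.le_add_left _ _)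
  · intro i
    have hi := h.two_pow_mul_fourth_le i
    simp only [Pi.add_apply, Pi.smul_apply, basic, smul_zero, zero_add]
    lia
  · intro i hi
    simpa [basic] using h.fourth_eq_zero hi

lemma step (hl : 2 ≤ l) (hK : K' ≤ K) (h₁ : CostBound K (l / 2) v₁)
    (h₀ : CostBound K (l / 2) v₀) :
    CostBound K l ((K' * l ^ 2) • shallow + (shiftCost v₁ + shiftCost v₀)) := by
  have hlog : Nat.log 2 l = Nat.log 2 (l / 2) + 1 := Nat.log_of_one_lt_of_le one_lt_two hl
  have hsq := four_mul_half_sq_le K l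
  have hsq_log : 4 * (K * (l / 2) ^ 2 * Nat.log 2 l) ≤ K * l ^ 2 * Nat.log 2 l := by
    rw [← mul_assoc]
    exact Nat.mul_le_mul_right _ hsq
  have hK' : K' * l ^ 2 ≤ K * l ^ 2 := by gcongr
  obtain ⟨ha₁, hk₁, hz₁, hf₁, he₁⟩ := h₁
  obtain ⟨ha₀, hk₀, hz₀, hf₀, he₀⟩ := h₀
  rw [← hlog] at ha₀ ha₁ hk₀ hk₁
  constructor
  · change K' * l ^ 2 * 1 + (2 * v₁ .aSq + 2 * v₀ .aSq) ≤ K * l ^ 2 * (Nat.log 2 l + 1)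
    linarith
  · change K' * l ^ 2 * 1 + ((v₁ .aSq + v₁ .klein) + (v₀ .aSq + v₀ .klein)) ≤
      K * l ^ 2 * (Nat.log 2 l + 1)
    linarith
  · change K' * l ^ 2 * 1 + (0 + 0) ≤ K * l ^ 2
    linarith
  · rintro (_ | _ | i)
    · change 2 ^ 0 * (K' * l ^ 2 * 1 + (0 + 0)) ≤ 4 * (K * l ^ 2)
      linarith
    · change 2 ^ 1 * (K' * l ^ 2 * 1 + (v₁ (.fourth 0) + v₀ (.fourth 0))) ≤ 4 * (K * l ^ 2)
      linarith
    · change 2 ^ (i + 2) * (K' * l ^ 2 * 0 + (v₁ (.fourth (i + 1)) + v₀ (.fourth (i + 1)))) ≤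
        4 * (K * l ^ 2)
      rw [pow_succ]
      linarith [hf₁ (i + 1), hf₀ (i + 1)]
  · rintro (_ | _ | i) hi
    · lia
    · lia
    · have hi' : l / 2 < 2 ^ (i + 1) := by lia
      simp [shallow, shiftCost, he₁ hi', he₀ hi']

end CostBound

lemma exists_areaLE_wordVal :
    ∃ K, ∀ l, 1 ≤ l → ∀ w : List L4, w.length ≤ l + 1 → wordVal w ∈ Ninf →
      ∃ v, CostBound K l v ∧ AreaLE relators v (wordVal w) := by
  obtain ⟨K₁, hbase⟩ := exists_wordVal_dist_one_of_length_le_two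
  obtain ⟨K₂, hhalves⟩ := exists_wordVal_dist_halves
  refine ⟨K₁ + K₂, fun l ↦ ?_⟩
  induction l using Nat.strong_induction_on with
  | _ l ih =>
    intro hl w hw hN
    obtain rfl | hl := hl.eq_or_lt
    · exact ⟨K₁ • basic, CostBound.smul_basic.mono (Nat.le_add_right _ _),
        by simpa [AreaDistLE] using hbase w hw hN⟩
    · obtain ⟨w₀, w₁, hw₀, hw₁, hN₀, hN₁, hdist⟩ := hhalves l w hl hw hN
      obtain ⟨v₀, hv₀, harea₀⟩ := ih (l / 2) (by lia) (by lia) w₀ hw₀ hN₀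
      obtain ⟨v₁, hv₁, harea₁⟩ := ih (l / 2) (by lia) (by lia) w₁ hw₁ hN₁
      exact ⟨_, hv₁.step hl (Nat.le_add_left _ _) hv₀,
        hdist.areaLE_add (harea₁.sigma.mul (harea₀.sigma.conj ga) le_rfl)⟩

lemma exists_areaLE_of_mem_ninf :
    ∃ K, ∀ l, 1 ≤ l → ∀ W ∈ Ninf, FreeGroup.norm W ≤ l + 1 →
      ∃ v, CostBound K l v ∧ AreaLE relators v W := by
  obtain ⟨K, hword⟩ := exists_areaLE_wordVal
  obtain ⟨K', hpos⟩ := exists_mk_dist_wordVal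
  refine ⟨2 * K' + K, fun l hl W hW hnorm ↦ ?_⟩
  have hdist := hpos W.toWord
  rw [FreeGroup.mk_toWord] at hdist
  obtain ⟨v, hv, harea⟩ := hword l hl _ (by simpa [FreeGroup.norm] using hnorm) (hdist.mem_ninf hW)
  refine ⟨_, hv.smul_basic_add ?_, hdist.areaLE_add harea⟩
  calc K' * W.toWord.length ≤ K' * (2 * l ^ 2) := by
        gcongr
        exact hnorm.trans (by nlinarith)
    _ = 2 * K' * l ^ 2 := by ring

/-! ### Counting relators by height -/

lemma RelClass.eq_of_height_eq_zero {c : RelClass} (hc : c.height = 0) :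
    c = .aSq ∨ c = .klein ∨ c = .fourth 0 := by
  rcases c with _ | _ | i
  · exact .inl rfl
  · exact .inr (.inl rfl)
  · exact .inr (.inr (congrArg _ hc))

lemma RelClass.eq_fourth_of_one_le_height {c : RelClass} (hc : 1 ≤ c.height) :
    c = .fourth c.height := by
  rcases c with _ | _ | i
  · exact absurd hc (by decide)
  · exact absurd hc (by decide)
  · rfl

lemma AreaLE.exists_factorization_by_height {v : RelClass → ℕ} {W : F4}
    (h : AreaLE relators v W) :
    ∃ (L : ℕ) (X R : Fin L → F4) (ε : Fin L → ℤ),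
      (∀ j, R j ∈ Rinf ∧ (ε j = 1 ∨ ε j = -1)) ∧
      W = (List.ofFn fun j ↦ X j * R j ^ ε j * (X j)⁻¹).prod ∧
      Nat.card {j // R j ∈ Sh 0} ≤ v .aSq + v .klein + v (.fourth 0) ∧
      ∀ i, 1 ≤ i → Nat.card {j // R j ∈ Sh i} ≤ v (.fourth i) := by
  obtain ⟨L, X, R, ε, cls, hR, rfl, hcard⟩ := h.exists_factorization
  refine ⟨L, X, R, fun j ↦ ε j, fun j ↦ ⟨?_, ?_⟩, rfl, ?_, fun i hi ↦ ?_⟩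
  · rw [← iUnion_relators]
    exact Set.mem_iUnion_of_mem _ (hR j)
  · exact (Int.units_eq_one_or (ε j)).imp (by simp +contextual) (by simp +contextual)
  · have hsub : {j | R j ∈ Sh 0} ⊆
        {j | cls j = .aSq} ∪ ({j | cls j = .klein} ∪ {j | cls j = .fourth 0}) :=
      fun j hj ↦ RelClass.eq_of_height_eq_zero (height_eq_of_mem_Sh (hR j) hj)
    calc Set.ncard {j | R j ∈ Sh 0}
        ≤ Set.ncard {j | cls j = .aSq} +
            (Set.ncard {j | cls j = .klein} + Set.ncard {j | cls j = .fourth 0}) :=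
          (Set.ncard_le_ncard hsub).trans <| (Set.ncard_union_le _ _).trans <|
            Nat.add_le_add_left (Set.ncard_union_le _ _) _
      _ ≤ v .aSq + (v .klein + v (.fourth 0)) :=
          add_le_add (hcard _) (add_le_add (hcard _) (hcard _))
      _ = v .aSq + v .klein + v (.fourth 0) := (add_assoc ..).symm
  · have hsub : {j | R j ∈ Sh i} ⊆ {j | cls j = .fourth i} := by
      intro j hj
      obtain rfl := height_eq_of_mem_Sh (hR j) hj
      exact RelClass.eq_fourth_of_one_le_height hi
    exact (Set.ncard_le_ncard hsub).trans (hcard _)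

lemma natCast_le_logb_two {i x : ℕ} (h : 2 ^ i ≤ x) : (i : ℝ) ≤ Real.logb 2 x := by
  rw [Real.le_logb_iff_rpow_le one_lt_two (by exact_mod_cast (Nat.two_pow_pos i).trans_le h)]
  exact_mod_cast h

namespace CostBound

variable {K x : ℕ} {v : RelClass → ℕ}

lemma height_zero_le (h : CostBound K (x - 1) v) (hx : 2 ≤ x) :
    ((v .aSq + v .klein + v (.fourth 0) : ℕ) : ℝ) ≤
      4 * (2 * K + 2) * (x : ℝ) ^ 2 * Real.logb 2 x := by
  have one_le_logb : 1 ≤ Real.logb 2 x := by simpa using natCast_le_logb_two (i := 1) hx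
  have log_le_logb : (Nat.log 2 (x - 1) : ℝ) ≤ Real.logb 2 x :=
    natCast_le_logb_two ((Nat.pow_log_le_self 2 (by lia)).trans (Nat.sub_le x 1))
  have hsq : K * (x - 1) ^ 2 ≤ K * x ^ 2 := by gcongr; exact Nat.sub_le x 1
  have hcount : v .aSq + v .klein + v (.fourth 0) ≤ K * x ^ 2 * (2 * Nat.log 2 (x - 1) + 3) := by
    have hlog := Nat.mul_le_mul_right (Nat.log 2 (x - 1) + 1) hsq
    linarith [h.aSq_le, h.klein_le, h.fourth_zero_le]
  calc ((v .aSq + v .klein + v (.fourth 0) : ℕ) : ℝ)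
      ≤ K * (x : ℝ) ^ 2 * (2 * Nat.log 2 (x - 1) + 3) := by exact_mod_cast hcount
    _ ≤ K * (x : ℝ) ^ 2 * (5 * Real.logb 2 x) := by gcongr; linarith
    _ = 5 * K * ((x : ℝ) ^ 2 * Real.logb 2 x) := by ring
    _ ≤ 4 * (2 * K + 2) * ((x : ℝ) ^ 2 * Real.logb 2 x) :=
      mul_le_mul_of_nonneg_right (by linarith) (by positivity)
    _ = 4 * (2 * K + 2) * (x : ℝ) ^ 2 * Real.logb 2 x := by ring

lemma fourth_le (h : CostBound K (x - 1) v) {i : ℕ} (hi : 1 ≤ i) :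
    (v (.fourth i) : ℝ) ≤ (2 * K + 2) * (x : ℝ) ^ 2 / 2 ^ (i - 1) := by
  obtain ⟨i, rfl⟩ := Nat.exists_eq_add_of_le' hi
  have hcount : 2 ^ (i + 1) * v (.fourth (i + 1)) ≤ 4 * (K * x ^ 2) :=
    (h.two_pow_mul_fourth_le _).trans (by gcongr; exact Nat.sub_le x 1)
  have hcount' : (2 : ℝ) ^ (i + 1) * v (.fourth (i + 1)) ≤ 4 * (K * (x : ℝ) ^ 2) := by
    exact_mod_cast hcount
  rw [Nat.add_sub_cancel, le_div_iff₀ (by positivity)]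
  rw [pow_succ] at hcount'
  linarith [sq_nonneg (x : ℝ)]

lemma height_le_logb (h : CostBound K (x - 1) v) {i : ℕ} (hi : v (.fourth i) ≠ 0) :
    (i : ℝ) ≤ Real.logb 2 x :=
  natCast_le_logb_two <| by
    by_contra! hlt
    exact hi (h.fourth_eq_zero (by lia))

end CostBound

end Grigorchuk

/-- every `W ∈ N(∞)` of length at most `x` admits an expression
as a product of conjugates of powers `±1` of relators of `R(∞)` whose numbers
of relators of each height are controlled as stated. -/
theorem grigorchuk_h_tuple :
    ∃ C : ℝ, 1 < C ∧
      ∀ x : ℕ, 2 ≤ x →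
        ∀ W ∈ Subgroup.normalClosure Rinf, FreeGroup.norm W ≤ x →
          ∃ (L : ℕ) (X R : Fin L → F4) (ε : Fin L → ℤ),
            (∀ j, R j ∈ Rinf ∧ (ε j = 1 ∨ ε j = -1)) ∧
            W = (List.ofFn fun j => X j * R j ^ ε j * (X j)⁻¹).prod ∧
            (Nat.card {j : Fin L // R j ∈ Sh 0} : ℝ) ≤
              4 * C * (x : ℝ) ^ 2 * Real.logb 2 (x : ℝ) ∧
            (∀ i : ℕ, 1 ≤ i → (i : ℝ) ≤ Real.logb 2 (x : ℝ) →
              (Nat.card {j : Fin L // R j ∈ Sh i} : ℝ) ≤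
                C * (x : ℝ) ^ 2 / 2 ^ (i - 1)) ∧
            (∀ j, ∀ i : ℕ, R j ∈ Sh i → (i : ℝ) ≤ Real.logb 2 (x : ℝ)) := by
  obtain ⟨K, hK⟩ := Grigorchuk.exists_areaLE_of_mem_ninf
  refine ⟨2 * K + 2, by linarith [(Nat.cast_nonneg K : (0 : ℝ) ≤ K)], fun x hx W hW hnorm ↦ ?_⟩
  obtain ⟨v, hv, harea⟩ := hK (x - 1) (by lia) W hW (by lia)
  obtain ⟨L, X, R, ε, hR, hprod, hcard_zero, hcard⟩ := harea.exists_factorization_by_height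
  refine ⟨L, X, R, ε, hR, hprod, ?_, fun i hi _ ↦ ?_, fun j i hj ↦ ?_⟩
  · exact (Nat.cast_le.2 hcard_zero).trans (hv.height_zero_le hx)
  · exact (Nat.cast_le.2 (hcard i hi)).trans (hv.fourth_le hi)
  · obtain rfl | hi := Nat.eq_zero_or_pos i
    · simpa using Real.logb_nonneg one_lt_two (by exact_mod_cast one_le_two.trans hx)
    · have : Nonempty {j // R j ∈ Sh i} := ⟨⟨j, hj⟩⟩
      exact hv.height_le_logb (Nat.card_pos.trans_le (hcard i hi)).ne'
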